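/- Let n ≥ 2, −∞ < μ < 1/4 and let γ ∈ ℝ satisfy Λ(γ) < Λ(α₊), where Λ(s) := s(s+n−2). Then there exists a positive function k : (0,1] → (0,∞), twice continuously differentiable on (0,1) and continuous at t = 1 with k(1) > 0, solving (1−t²)k''(t) − (n−1)t k'(t) + (μ/t²)k(t) + Λ(γ)k(t) = 0 for t ∈ (0,1), and such that lim_{t→0⁺} k(t)/t^{α₋} exists and is a positive constant. Moreover, the functions H₊(x) := |x|^γ k(x₁/|x|) and H₋(x) := |x|^{−(γ+n−2)} k(x₁/|x|) are positive L_μ-harmonic functions on ℝⁿ₊. -/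

import Mathlib

open Real Set

noncomputable def lap {n : ℕ} (u : EuclideanSpace ℝ (Fin n) → ℝ)
    (x : EuclideanSpace ℝ (Fin n)) : ℝ :=
  ∑ i : Fin n, iteratedFDeriv ℝ 2 u x ![EuclideanSpace.single i 1, EuclideanSpace.single i 1]

noncomputable def x1 {n : ℕ} (x : EuclideanSpace ℝ (Fin n)) : ℝ :=
  if h : 0 < n then x ⟨0, h⟩ else 0

def halfSpace (n : ℕ) : Set (EuclideanSpace ℝ (Fin n)) := {x | 0 < x1 x}

noncomputable def aPlus (μ : ℝ) : ℝ := 1 / 2 + Real.sqrt (1 / 4 - μ)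

noncomputable def aMinus (μ : ℝ) : ℝ := 1 / 2 - Real.sqrt (1 / 4 - μ)

noncomputable def Lam (n : ℕ) (s : ℝ) : ℝ := s * (s + n - 2)


/-- power series sum -/
noncomputable def psum (u : ℕ → ℝ) (z : ℝ) : ℝ := ∑' m : ℕ, u m * z ^ m

/-- derived coefficients -/
def dcoef (u : ℕ → ℝ) (m : ℕ) : ℝ := ((m : ℝ) + 1) * u (m + 1)

/-- positive coefficients with ratio tending to one -/
def GoodCoef (u : ℕ → ℝ) : Prop :=
  (∀ m, 0 < u m) ∧ Filter.Tendsto (fun m => u (m + 1) / u m) Filter.atTop (nhds 1)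

theorem ratio_nat_tendsto (a b : ℝ) :
    Filter.Tendsto (fun m : ℕ => (a + (m : ℝ)) / (b + (m : ℝ))) Filter.atTop (nhds 1) := by
  have h := tendsto_add_mul_div_add_mul_atTop_nhds a b (1 : ℝ) (d := 1) one_ne_zero
  simpa using h

theorem GoodCoef.dcoef {u : ℕ → ℝ} (h : GoodCoef u) : GoodCoef (dcoef u) := by
  refine ⟨fun m => ?_, ?_⟩
  · have := h.1 (m + 1)
    unfold _root_.dcoef
    positivity
  · have h1 := (h.2.comp (Filter.tendsto_add_atTop_nat 1)).mul (ratio_nat_tendsto 2 1)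
    rw [mul_one] at h1
    refine h1.congr fun m => ?_
    have h2 := (h.1 (m + 1)).ne'
    have h3 : (m : ℝ) + 1 ≠ 0 := by positivity
    have h4 : 1 + (m : ℝ) ≠ 0 := by positivity
    simp only [Function.comp, _root_.dcoef]
    push_cast
    field_simp
    ring

theorem GoodCoef.summable {u : ℕ → ℝ} (h : GoodCoef u) {z : ℝ} (hz : |z| < 1) :
    Summable (fun m => u m * z ^ m) := by
  rcases eq_or_ne z 0 with rfl | h0
  · refine summable_of_ne_finset_zero (s := {0}) fun m hm => ?_
    have : m ≠ 0 := by simpa using hm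
    simp [this]
  · refine summable_of_ratio_test_tendsto_lt_one hz
      (Filter.Eventually.of_forall fun m => mul_ne_zero (h.1 m).ne' (pow_ne_zero _ h0)) ?_
    have h1 := h.2.mul_const |z|
    rw [one_mul] at h1
    refine h1.congr fun m => ?_
    have h2 := h.1 m
    have h3 := h.1 (m + 1)
    have h4 : 0 < |z| := abs_pos.2 h0
    simp only [norm_mul, norm_pow, Real.norm_eq_abs, abs_of_pos h2, abs_of_pos h3, pow_succ]
    field_simp

theorem GoodCoef.hasSum {u : ℕ → ℝ} (h : GoodCoef u) {z : ℝ} (hz : |z| < 1) :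
    HasSum (fun m => u m * z ^ m) (psum u z) := (h.summable hz).hasSum

theorem GoodCoef.hasDerivAt {u : ℕ → ℝ} (h : GoodCoef u) {z : ℝ} (hz : |z| < 1) :
    HasDerivAt (psum u) (psum (_root_.dcoef u) z) z := by
  obtain ⟨r, hr1, hr2⟩ := exists_between hz
  have hr0 : 0 ≤ r := (abs_nonneg z).trans hr1.le
  have hs : Summable (fun m : ℕ => (m : ℝ) * u m * r ^ (m - 1)) := by
    rw [← summable_nat_add_iff 1]
    have := h.dcoef.summable (z := r) (by rwa [abs_of_nonneg hr0])
    refine this.congr fun m => ?_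
    simp [_root_.dcoef]
  have key := hasDerivAt_tsum_of_isPreconnected (g := fun m x => u m * x ^ m)
    (g' := fun m x => (m : ℝ) * u m * x ^ (m - 1)) (t := Metric.ball (0 : ℝ) r)
    (y₀ := z) (y := z) hs Metric.isOpen_ball
    (convex_ball (0 : ℝ) r).isPreconnected
    (fun m y _ => by
      have := (hasDerivAt_pow m y).const_mul (u m)
      exact this.congr_deriv (by ring))
    (fun m y hy => by
      have hy' : |y| ≤ r := by simpa using (mem_ball_zero_iff.1 hy).le
      have h2 := (h.1 m).le
      simp only [norm_mul, norm_pow, Real.norm_eq_abs, abs_of_nonneg h2, Nat.abs_cast]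
      gcongr)
    (by simpa using hr1) (h.summable hz) (by simpa using hr1)
  have e : psum (_root_.dcoef u) z = ∑' m : ℕ, (m : ℝ) * u m * z ^ (m - 1) := by
    have hs' : Summable (fun m : ℕ => (m : ℝ) * u m * z ^ (m - 1)) := by
      rw [← summable_nat_add_iff 1]
      refine (h.dcoef.summable hz).congr fun m => ?_
      simp [_root_.dcoef]
    rw [hs'.tsum_eq_zero_add]
    simp [psum, _root_.dcoef]
  rw [e]
  exact key

theorem hasSum_shift {w : ℕ → ℝ} {z S : ℝ} (h : HasSum (fun m => w (m + 1) * z ^ m) S)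
    (h0 : w 0 = 0) : HasSum (fun m => w m * z ^ m) (z * S) := by
  rw [← hasSum_nat_add_iff' 1]
  simp only [Finset.range_one, Finset.sum_singleton, h0, zero_mul, sub_zero]
  have e : (fun m => w (m + 1) * z ^ (m + 1)) = fun m => z * (w (m + 1) * z ^ m) := by
    ext m
    ring
  rw [e]
  exact h.mul_left z

/-- Pochhammer product -/
noncomputable def poch (s : ℝ) (m : ℕ) : ℝ := ∏ j ∈ Finset.range m, (s + j)

theorem poch_succ (s : ℝ) (m : ℕ) : poch s (m + 1) = poch s m * (s + m) :=
  Finset.prod_range_succ _ _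

theorem poch_pos {s : ℝ} (hs : 0 < s) (m : ℕ) : 0 < poch s m :=
  Finset.prod_pos fun j _ => by positivity

noncomputable def hyp (a b c : ℝ) (m : ℕ) : ℝ := poch a m * poch b m / (poch c m * m.factorial)

theorem hyp_pos {a b c : ℝ} (ha : 0 < a) (hb : 0 < b) (hc : 0 < c) (m : ℕ) : 0 < hyp a b c m := by
  have := poch_pos ha m
  have := poch_pos hb m
  have := poch_pos hc m
  unfold hyp
  positivity

theorem hyp_succ {a b c : ℝ} (hc : 0 < c) (m : ℕ) :
    hyp a b c (m + 1) * ((m + 1) * (c + m)) = hyp a b c m * ((a + m) * (b + m)) := by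
  have h1 := (poch_pos hc m).ne'
  have h2 : c + (m : ℝ) ≠ 0 := by positivity
  have h3 : (m.factorial : ℝ) ≠ 0 := by positivity
  unfold hyp
  rw [poch_succ, poch_succ, poch_succ, Nat.factorial_succ]
  push_cast
  field_simp

theorem hyp_good {a b c : ℝ} (ha : 0 < a) (hb : 0 < b) (hc : 0 < c) : GoodCoef (hyp a b c) := by
  refine ⟨hyp_pos ha hb hc, ?_⟩
  have h1 := (ratio_nat_tendsto a 1).mul (ratio_nat_tendsto b c)
  rw [mul_one] at h1
  refine h1.congr fun m => ?_
  have h2 := hyp_succ (a := a) (b := b) hc m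
  have h3 := (hyp_pos ha hb hc m).ne'
  have h4 : c + (m : ℝ) ≠ 0 := by positivity
  have h5 : 1 + (m : ℝ) ≠ 0 := by positivity
  rw [eq_div_iff h3]
  field_simp
  linarith

theorem hyp_ode {a b c : ℝ} (ha : 0 < a) (hb : 0 < b) (hc : 0 < c) {z : ℝ} (hz : |z| < 1) :
    z * (1 - z) * psum (dcoef (dcoef (hyp a b c))) z
      + (c - (a + b + 1) * z) * psum (dcoef (hyp a b c)) z - a * b * psum (hyp a b c) z = 0 := by
  have g := hyp_good ha hb hc
  set u := hyp a b c with hu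
  have s0 := g.hasSum hz
  have s1 := g.dcoef.hasSum hz
  have s2 := g.dcoef.dcoef.hasSum hz
  have s3 : HasSum (fun m : ℕ => ((m : ℝ) * dcoef u m) * z ^ m) (z * psum (dcoef (dcoef u)) z) := by
    refine hasSum_shift (w := fun m : ℕ => (m : ℝ) * dcoef u m) ?_ (by simp)
    convert s2 using 3 with m
    simp [dcoef]
  have s4 : HasSum (fun m : ℕ => ((m : ℝ) * (m - 1) * u m) * z ^ m)
      (z * (z * psum (dcoef (dcoef u)) z)) := by
    refine hasSum_shift (w := fun m : ℕ => (m : ℝ) * (m - 1) * u m) ?_ (by simp)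
    convert s3 using 3 with m
    simp [dcoef]
    ring
  have s5 : HasSum (fun m : ℕ => ((m : ℝ) * u m) * z ^ m) (z * psum (dcoef u) z) := by
    refine hasSum_shift (w := fun m : ℕ => (m : ℝ) * u m) ?_ (by simp)
    convert s1 using 3 with m
    simp [dcoef]
  have s6 := (((s3.sub s4).add (s1.mul_left c)).sub (s5.mul_left (a + b + 1))).sub
    (s0.mul_left (a * b))
  have s7 := s6.unique (a₂ := 0) (by
    have e0 : ∀ f : ℕ → ℝ, (∀ m, f m = 0) → HasSum f 0 := fun f hf => by
      rw [funext hf]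
      exact hasSum_zero
    refine e0 _ fun m => ?_
    have := hyp_succ (a := a) (b := b) hc m
    rw [← hu] at this
    simp only [dcoef]
    linear_combination z ^ m * this)
  linarith

theorem poch_multichoose (ν : ℝ) (m : ℕ) :
    poch ν m / m.factorial = Ring.choose (ν + m - 1) m := by
  rw [← Ring.multichoose_eq]
  have h1 := Ring.factorial_nsmul_multichoose_eq_ascPochhammer ν m
  rw [div_eq_iff (by positivity), mul_comm, ← nsmul_eq_mul, h1]
  rw [Polynomial.ascPochhammer_smeval_eq_eval]
  clear h1
  induction m with
  | zero => simp [poch]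
  | succ m ih => rw [ascPochhammer_succ_eval, poch_succ, ih]

theorem binom_sum {ν : ℝ} {z : ℝ} (hz : |z| < 1) :
    HasSum (fun m : ℕ => poch ν m / m.factorial * z ^ m) (1 / (1 - z) ^ ν) := by
  have h := (Real.one_div_one_sub_rpow_hasFPowerSeriesOnBall_zero ν).hasSum (y := z) (by
    simpa [enorm_eq_nnnorm, ← NNReal.coe_lt_coe] using hz)
  simp only [FormalMultilinearSeries.ofScalars_apply_eq, zero_add, smul_eq_mul] at h
  have e0 : (fun m : ℕ => poch ν m / m.factorial * z ^ m)
      = fun m : ℕ => Ring.choose (ν + m - 1) m * z ^ m := by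
    ext m
    rw [poch_multichoose]
  rw [e0]
  exact h

theorem hyp_ratio_tendsto {a b c ν : ℝ} (ha : 0 < a) (hb : 0 < b) (hc : 0 < c) (hν : 0 < ν)
    (hs : a + b = c + ν) :
    Filter.Tendsto (fun m : ℕ => hyp a b c m / (poch ν m / m.factorial)) Filter.atTop
      (nhds (Gamma c * Gamma ν / (Gamma a * Gamma b))) := by
  rw [← Filter.tendsto_add_atTop_iff_nat 1]
  have h := ((GammaSeq_tendsto_Gamma c).mul (GammaSeq_tendsto_Gamma ν)).div
    ((GammaSeq_tendsto_Gamma a).mul (GammaSeq_tendsto_Gamma b))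
    (mul_pos (Gamma_pos_of_pos ha) (Gamma_pos_of_pos hb)).ne'
  refine h.congr' ?_
  filter_upwards [Filter.eventually_gt_atTop 0] with m hm
  have hm' : (0 : ℝ) < m := by exact_mod_cast hm
  have e : ∀ s, GammaSeq s m = (m : ℝ) ^ s * m.factorial / poch s (m + 1) := fun s => rfl
  have p1 := (poch_pos ha (m + 1)).ne'
  have p2 := (poch_pos hb (m + 1)).ne'
  have p3 := (poch_pos hc (m + 1)).ne'
  have p4 := (poch_pos hν (m + 1)).ne'
  have q1 := (rpow_pos_of_pos hm' a).ne'
  have q2 := (rpow_pos_of_pos hm' b).ne'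
  have hp : (m : ℝ) ^ a * (m : ℝ) ^ b = (m : ℝ) ^ c * (m : ℝ) ^ ν := by
    rw [← rpow_add hm', ← rpow_add hm', hs]
  have f1 : (m.factorial : ℝ) ≠ 0 := by positivity
  have f2 : ((m + 1).factorial : ℝ) ≠ 0 := by positivity
  simp only [Pi.div_apply, e, hyp]
  field_simp
  linear_combination -hp

theorem abel_ratio {u v : ℕ → ℝ} {G : ℝ → ℝ} {L : ℝ} (hv : ∀ m, 0 < v m)
    (hu : ∀ z, |z| < 1 → Summable (fun m => u m * z ^ m))
    (hG : ∀ z, |z| < 1 → HasSum (fun m => v m * z ^ m) (G z))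
    (hr : Filter.Tendsto (fun m => u m / v m) Filter.atTop (nhds L))
    (hGt : Filter.Tendsto G (nhdsWithin 1 (Iio 1)) Filter.atTop) :
    Filter.Tendsto (fun z => psum u z / G z) (nhdsWithin 1 (Iio 1)) (nhds L) := by
  rw [Metric.tendsto_nhds]
  intro ε hε
  obtain ⟨N, hN⟩ := Filter.eventually_atTop.1 (Metric.tendsto_nhds.1 hr (ε / 2) (half_pos hε))
  set C : ℝ := ∑ m ∈ Finset.range N, |u m - L * v m| with hC
  have hC0 : 0 ≤ C := Finset.sum_nonneg fun _ _ => abs_nonneg _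
  have h01 : ∀ᶠ z : ℝ in nhdsWithin 1 (Iio 1), 0 < z ∧ z < 1 := by
    filter_upwards [Ioo_mem_nhdsLT (zero_lt_one (α := ℝ))] with z hz using hz
  filter_upwards [h01, hGt.eventually_gt_atTop (2 * C / ε), hGt.eventually_gt_atTop 0]
    with z ⟨hz0, hz1⟩ hz2 hz3
  have hz : |z| < 1 := by rwa [abs_of_pos hz0]
  have s1 := (hu z hz).hasSum.sub ((hG z hz).mul_left L)
  have s2 : HasSum (fun m => |u m - L * v m| * (if m < N then 1 else 0)) C := by
    have e1 : C = ∑ m ∈ Finset.range N, |u m - L * v m| * (if m < N then 1 else 0) := by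
      rw [hC]
      refine Finset.sum_congr rfl fun m hm => ?_
      simp [Finset.mem_range.1 hm]
    rw [e1]
    refine hasSum_sum_of_ne_finset_zero ?_
    · intro m hm
      simp only [Finset.mem_range, not_lt] at hm
      simp [not_lt.2 hm]
  have s3 := s2.add ((hG z hz).mul_left (ε / 2))
  have hb : ∀ m, ‖u m * z ^ m - L * (v m * z ^ m)‖ ≤
      |u m - L * v m| * (if m < N then 1 else 0) + ε / 2 * (v m * z ^ m) := by
    intro m
    have e : u m * z ^ m - L * (v m * z ^ m) = (u m - L * v m) * z ^ m := by ring
    have hzm : z ^ m ≤ 1 := pow_le_one₀ hz0.le hz1.le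
    have hzm0 : 0 < z ^ m := pow_pos hz0 m
    have hvm := hv m
    rw [e, norm_mul, Real.norm_eq_abs, Real.norm_eq_abs, abs_of_pos hzm0]
    split_ifs with hm
    · have : 0 ≤ ε / 2 * (v m * z ^ m) := by positivity
      have := mul_le_mul_of_nonneg_left hzm (abs_nonneg (u m - L * v m))
      linarith
    · have h := hN m (not_lt.1 hm)
      rw [Real.dist_eq] at h
      have e2 : u m - L * v m = (u m / v m - L) * v m := by field_simp
      rw [e2, abs_mul, abs_of_pos hvm]
      have := mul_le_mul_of_nonneg_right h.le (mul_pos hvm hzm0).le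
      linarith
  have s4 := tsum_of_norm_bounded s3 hb
  rw [s1.tsum_eq] at s4
  have s5 : |psum u z - L * G z| ≤ C + ε / 2 * G z := s4
  rw [Real.dist_eq]
  have e : psum u z / G z - L = (psum u z - L * G z) / G z := by field_simp
  rw [e, abs_div, abs_of_pos hz3, div_lt_iff₀ hz3]
  rw [div_lt_iff₀ hε] at hz2
  linarith

theorem hyp_limit {a b c ν : ℝ} (ha : 0 < a) (hb : 0 < b) (hc : 0 < c) (hν : 0 < ν)
    (hs : a + b = c + ν) :
    Filter.Tendsto (fun z => psum (hyp a b c) z * (1 - z) ^ ν) (nhdsWithin 1 (Iio 1))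
      (nhds (Gamma c * Gamma ν / (Gamma a * Gamma b))) := by
  have h := abel_ratio (u := hyp a b c) (v := fun m => poch ν m / m.factorial)
    (G := fun z => 1 / (1 - z) ^ ν) (fun m => by have := poch_pos hν m; positivity)
    (fun z hz => (hyp_good ha hb hc).summable hz) (fun z hz => binom_sum hz)
    (hyp_ratio_tendsto ha hb hc hν hs) ?_
  · refine h.congr fun z => ?_
    simp
  · have h1 : Filter.Tendsto (fun z : ℝ => (1 - z)) (nhdsWithin 1 (Iio 1)) (nhdsWithin 0 (Ioi 0)) := by
      refine tendsto_nhdsWithin_iff.2 ⟨?_, ?_⟩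
      · have : Filter.Tendsto (fun z : ℝ => 1 - z) (nhds 1) (nhds (1 - 1)) :=
          (continuous_const.sub continuous_id).tendsto 1
        rw [sub_self] at this
        exact this.mono_left nhdsWithin_le_nhds
      · filter_upwards [self_mem_nhdsWithin] with z hz
        have : z < 1 := hz
        simpa using this
    have h2 := (tendsto_rpow_neg_nhdsGT_zero (neg_lt_zero.2 hν)).comp h1
    refine h2.congr' ?_
    filter_upwards [self_mem_nhdsWithin] with z hz
    have : z < 1 := hz
    simp [rpow_neg (sub_nonneg.2 this.le)]

theorem line_second {E : Type*} [NormedAddCommGroup E] [NormedSpace ℝ E] {u : E → ℝ} {x e : E}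
    {D : ℝ → ℝ} {D2 : ℝ} (hu : ContDiffAt ℝ 2 u x)
    (h1 : ∀ᶠ s in nhds (0 : ℝ), HasDerivAt (fun s : ℝ => u (x + s • e)) (D s) s)
    (h2 : HasDerivAt D D2 0) : iteratedFDeriv ℝ 2 u x ![e, e] = D2 := by
  rw [iteratedFDeriv_two_apply]
  simp only [Matrix.cons_val_zero, Matrix.cons_val_one]
  have hl : ∀ s : ℝ, HasDerivAt (fun s : ℝ => x + s • e) e s := fun s => by
    simpa using ((hasDerivAt_id s).smul_const e).const_add x
  have hc : Filter.Tendsto (fun s : ℝ => x + s • e) (nhds 0) (nhds x) := by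
    have := (hl 0).continuousAt.tendsto
    simpa using this
  have hdu : ∀ᶠ y in nhds x, DifferentiableAt ℝ u y := by
    filter_upwards [hu.eventually (by simp)] with y hy
    exact hy.differentiableAt (by norm_num)
  have hfd : DifferentiableAt ℝ (fderiv ℝ u) x :=
    (hu.fderiv_right (m := 1) (by norm_num)).differentiableAt (by norm_num)
  have hfd' : HasFDerivAt (fderiv ℝ u) (fderiv ℝ (fderiv ℝ u) x) (x + (0 : ℝ) • e) := by
    simpa using hfd.hasFDerivAt
  have h3 : HasDerivAt (fun s : ℝ => fderiv ℝ u (x + s • e)) (fderiv ℝ (fderiv ℝ u) x e) 0 :=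
    hfd'.comp_hasDerivAt (0 : ℝ) (hl 0)
  have h4 : HasDerivAt (fun s : ℝ => fderiv ℝ u (x + s • e) e)
      (fderiv ℝ (fderiv ℝ u) x e e) 0 := by
    have := h3.clm_apply (hasDerivAt_const (0 : ℝ) e)
    simpa using this
  have h5 : (fun s : ℝ => fderiv ℝ u (x + s • e) e) =ᶠ[nhds 0] D := by
    filter_upwards [h1, hc.eventually hdu] with s hs1 hs2
    exact (hs2.hasFDerivAt.comp_hasDerivAt s (hl s)).unique hs1
  exact (h4.congr_of_eventuallyEq h5.symm).unique h2

theorem x1_eq {n : ℕ} (h : 0 < n) (x : EuclideanSpace ℝ (Fin n)) : x1 x = x ⟨0, h⟩ := by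
  simp [x1, h]

theorem x1_le_norm {n : ℕ} (x : EuclideanSpace ℝ (Fin n)) : x1 x ≤ ‖x‖ := by
  unfold x1
  split_ifs with h
  · exact (le_abs_self _).trans (by simpa using PiLp.norm_apply_le x ⟨0, h⟩)
  · exact norm_nonneg _

theorem x1_contDiff {n : ℕ} : ContDiff ℝ 2 (x1 : EuclideanSpace ℝ (Fin n) → ℝ) := by
  by_cases h : 0 < n
  · have : (x1 : EuclideanSpace ℝ (Fin n) → ℝ) = fun x => x ⟨0, h⟩ := funext (x1_eq h)
    rw [this]
    fun_prop
  · have : (x1 : EuclideanSpace ℝ (Fin n) → ℝ) = fun x => 0 := by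
      ext x
      simp [x1, h]
    rw [this]
    exact contDiff_const

theorem halfSpace_isOpen (n : ℕ) : IsOpen (halfSpace n) :=
  isOpen_lt continuous_const x1_contDiff.continuous

theorem halfSpace_norm_pos {n : ℕ} {x : EuclideanSpace ℝ (Fin n)} (hx : x ∈ halfSpace n) :
    0 < ‖x‖ := lt_of_lt_of_le hx (x1_le_norm x)

theorem halfSpace_ratio {n : ℕ} {x : EuclideanSpace ℝ (Fin n)} (hx : x ∈ halfSpace n) :
    x1 x / ‖x‖ ∈ Ioc (0 : ℝ) 1 :=
  ⟨div_pos hx (halfSpace_norm_pos hx), (div_le_one (halfSpace_norm_pos hx)).2 (x1_le_norm x)⟩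

theorem sep_contDiff {n : ℕ} {k : ℝ → ℝ} {B : ℝ} (hB : 1 < B) (hk : ContDiffOn ℝ 2 k (Ioo 0 B))
    (g : ℝ) : ContDiffOn ℝ 2
        (fun x : EuclideanSpace ℝ (Fin n) => ‖x‖ ^ g * k (x1 x / ‖x‖)) (halfSpace n) := by
  have hn : ContDiffOn ℝ 2 (fun x : EuclideanSpace ℝ (Fin n) => ‖x‖) (halfSpace n) :=
    fun x hx => (contDiffAt_norm ℝ (norm_pos_iff.1 (halfSpace_norm_pos hx))).contDiffWithinAt
  refine ContDiffOn.mul ?_ ?_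
  · exact hn.rpow_const_of_ne fun x hx => (halfSpace_norm_pos hx).ne'
  · refine hk.comp (x1_contDiff.contDiffOn.div hn fun x hx => (halfSpace_norm_pos hx).ne') ?_
    intro x hx
    have := halfSpace_ratio hx
    exact ⟨this.1, this.2.trans_lt hB⟩

theorem second_line_calc {p q r k k1 k2 : ℝ → ℝ} {g d : ℝ} {s : ℝ} (hr : 0 < r s)
    (hp : HasDerivAt p d s) (hq : HasDerivAt q 1 s) (hr' : HasDerivAt r (q s / r s) s)
    (hk : HasDerivAt k (k1 (p s / r s)) (p s / r s))
    (hk1 : HasDerivAt k1 (k2 (p s / r s)) (p s / r s)) :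
    HasDerivAt (fun s => r s ^ g * k (p s / r s))
      (g * r s ^ (g - 2) * q s * k (p s / r s)
        + k1 (p s / r s) * (d * r s ^ (g - 1) - p s * q s * r s ^ (g - 3))) s ∧
    HasDerivAt (fun s => g * r s ^ (g - 2) * q s * k (p s / r s)
        + k1 (p s / r s) * (d * r s ^ (g - 1) - p s * q s * r s ^ (g - 3)))
      (r s ^ (g - 2) * (g * (g - 2) * (q s / r s) ^ 2 * k (p s / r s) + g * k (p s / r s)
        + g * (q s / r s) * k1 (p s / r s) * (d - p s / r s * (q s / r s))
        + k2 (p s / r s) * (d - p s / r s * (q s / r s)) ^ 2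
        + k1 (p s / r s) * (d * (g - 1) * (q s / r s) - d * (q s / r s) - p s / r s
          - (g - 3) * (p s / r s) * (q s / r s) ^ 2))) s := by
  have ht := hp.div hr' hr.ne'
  have hpow : ∀ e : ℝ, HasDerivAt (fun s => r s ^ e) (q s / r s * e * r s ^ (e - 1)) s :=
    fun e => hr'.rpow_const (Or.inl hr.ne')
  have e1 : r s ^ (g - 1) = r s ^ (g - 2) * r s := by
    rw [← rpow_add_one hr.ne']
    ring_nf
  have e0 : r s ^ g = r s ^ (g - 2) * r s ^ 2 := by
    rw [← rpow_add_natCast hr.ne']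
    norm_num
  have e3 : r s ^ (g - 3) = r s ^ (g - 2) / r s := by
    rw [← rpow_sub_one hr.ne']
    ring_nf
  have e4 : r s ^ (g - 2 - 1) = r s ^ (g - 2) / r s := by
    rw [← rpow_sub_one hr.ne']
  have e5 : r s ^ (g - 1 - 1) = r s ^ (g - 2) := by ring_nf
  have e6 : r s ^ (g - 3 - 1) = r s ^ (g - 2) / r s ^ 2 := by
    rw [← rpow_sub_natCast hr.ne']
    norm_num
    ring_nf
  have hkc : HasDerivAt (fun s => k (p s / r s)) _ s := HasDerivAt.comp s hk ht
  have hk1c : HasDerivAt (fun s => k1 (p s / r s)) _ s := HasDerivAt.comp s hk1 ht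
  constructor
  · refine ((hpow g).mul hkc).congr_deriv ?_
    rw [e0, e3, e1]
    field_simp
  · refine (((((hpow (g - 2)).const_mul g).mul hq).mul hkc).add (hk1c.mul
      (((hpow (g - 1)).const_mul d).sub ((hp.mul hq).mul (hpow (g - 3)))))).congr_deriv ?_
    simp only [Pi.mul_apply, Pi.sub_apply]
    rw [e3, e1, e4, e5, e6]
    field_simp
    ring

theorem lap_sep {n : ℕ} (hn : 2 ≤ n) {k k1 k2 : ℝ → ℝ} {B : ℝ} (hB : 1 < B)
    (hk : ContDiffOn ℝ 2 k (Ioo 0 B)) (h1 : ∀ t ∈ Ioo 0 B, HasDerivAt k (k1 t) t)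
    (h2 : ∀ t ∈ Ioo 0 B, HasDerivAt k1 (k2 t) t) (g : ℝ)
    {x : EuclideanSpace ℝ (Fin n)} (hx : x ∈ halfSpace n) {t : ℝ} (ht : t = x1 x / ‖x‖) :
    lap (fun x : EuclideanSpace ℝ (Fin n) => ‖x‖ ^ g * k (x1 x / ‖x‖)) x =
      ‖x‖ ^ (g - 2) * ((1 - t ^ 2) * k2 t - ((n : ℝ) - 1) * t * k1 t + Lam n g * k t) := by
  have hn0 : 0 < n := by omega
  have hr0 := halfSpace_norm_pos hx
  have hcd := (sep_contDiff (n := n) hB hk g).contDiffAt ((halfSpace_isOpen n).mem_nhds hx)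
  set i0 : Fin n := ⟨0, hn0⟩ with hi0
  have key : ∀ i : Fin n, iteratedFDeriv ℝ 2
      (fun x : EuclideanSpace ℝ (Fin n) => ‖x‖ ^ g * k (x1 x / ‖x‖)) x
        ![EuclideanSpace.single i 1, EuclideanSpace.single i 1] =
      ‖x‖ ^ (g - 2) * (g * (g - 2) * (x i / ‖x‖) ^ 2 * k t + g * k t
        + g * (x i / ‖x‖) * k1 t * ((if i = i0 then 1 else 0) - t * (x i / ‖x‖))
        + k2 t * ((if i = i0 then 1 else 0) - t * (x i / ‖x‖)) ^ 2
        + k1 t * ((if i = i0 then 1 else 0) * (g - 1) * (x i / ‖x‖)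
          - (if i = i0 then 1 else 0) * (x i / ‖x‖) - t
          - (g - 3) * t * (x i / ‖x‖) ^ 2)) := by
    intro i
    set e : EuclideanSpace ℝ (Fin n) := EuclideanSpace.single i 1 with he
    set d : ℝ := if i = i0 then 1 else 0 with hd
    have hl : ∀ s : ℝ, HasDerivAt (fun s : ℝ => x + s • e) e s := fun s => by
      simpa using ((hasDerivAt_id s).smul_const e).const_add x
    have hc : Filter.Tendsto (fun s : ℝ => x + s • e) (nhds 0) (nhds x) := by
      have := (hl 0).continuousAt.tendsto
      simpa using this
    have hH : ∀ᶠ s : ℝ in nhds 0, x + s • e ∈ halfSpace n :=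
      hc.eventually ((halfSpace_isOpen n).mem_nhds hx)
    have hall : ∀ s : ℝ, x + s • e ∈ halfSpace n → _ := fun s hs =>
      second_line_calc (p := fun s => x1 (x + s • e)) (q := fun s => x i + s)
        (r := fun s => ‖x + s • e‖) (k := k) (k1 := k1) (k2 := k2) (g := g) (d := d) (s := s)
        (halfSpace_norm_pos hs)
        (by
          have e1 : (fun s : ℝ => x1 (x + s • e)) = fun s => x i0 + s * d := by
            ext s
            rw [x1_eq hn0]
            simp [he, hd, ← hi0, eq_comm]
          rw [e1]
          simpa using ((hasDerivAt_id s).mul_const d).const_add (x i0))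
        ((hasDerivAt_id s).const_add _)
        (by
          have e1 : (fun s : ℝ => ‖x + s • e‖) = fun s => √ (‖x‖ ^ 2 + 2 * s * x i + s ^ 2) := by
            ext s
            rw [← Real.sqrt_sq (norm_nonneg (x + s • e)), norm_add_sq_real]
            congr 1
            simp [he, norm_smul, inner_smul_right, EuclideanSpace.inner_single_right]
            ring
          have hp : 0 < √ (‖x‖ ^ 2 + 2 * s * x i + s ^ 2) := by
            rw [← congrFun e1 s]
            exact halfSpace_norm_pos hs
          rw [e1]
          have h3 : HasDerivAt (fun s : ℝ => ‖x‖ ^ 2 + 2 * s * x i + s ^ 2) (2 * x i + 2 * s) s := by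
            have := ((((hasDerivAt_id s).const_mul 2).mul_const (x i)).const_add (‖x‖ ^ 2)).add
              (hasDerivAt_pow 2 s)
            exact this.congr_deriv (by simp)
          refine (h3.sqrt (Real.sqrt_pos.1 hp).ne').congr_deriv ?_
          have e2 : ‖x + s • e‖ = √ (‖x‖ ^ 2 + 2 * s * x i + s ^ 2) := congrFun e1 s
          change _ = (x i + s) / ‖x + s • e‖
          rw [e2]
          field_simp)
        (h1 _ ⟨(halfSpace_ratio hs).1, (halfSpace_ratio hs).2.trans_lt hB⟩)
        (h2 _ ⟨(halfSpace_ratio hs).1, (halfSpace_ratio hs).2.trans_lt hB⟩)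
    have h0 := (hall 0 (by simpa using hx)).2
    simp only [zero_smul, add_zero, ← ht] at h0
    refine line_second hcd ?_ h0
    filter_upwards [hH] with s hs using (hall s hs).1
  unfold lap
  rw [Finset.sum_congr rfl fun i _ => key i, ← Finset.mul_sum]
  congr 1
  have S1 : ∑ i : Fin n, (x i / ‖x‖) ^ 2 = 1 := by
    simp_rw [div_pow]
    rw [← Finset.sum_div, ← EuclideanSpace.real_norm_sq_eq]
    field_simp
  have S2 : ∑ i : Fin n, (if i = i0 then (1 : ℝ) else 0) * (x i / ‖x‖) = t := by
    simp [ht, x1_eq hn0, hi0]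
  have S3 : ∑ i : Fin n, (if i = i0 then (1 : ℝ) else 0) = 1 := by simp
  have S4 : ∑ i : Fin n, (1 : ℝ) = n := by simp
  have e : ∀ i : Fin n, (g * (g - 2) * (x i / ‖x‖) ^ 2 * k t + g * k t
        + g * (x i / ‖x‖) * k1 t * ((if i = i0 then 1 else 0) - t * (x i / ‖x‖))
        + k2 t * ((if i = i0 then 1 else 0) - t * (x i / ‖x‖)) ^ 2
        + k1 t * ((if i = i0 then 1 else 0) * (g - 1) * (x i / ‖x‖)
          - (if i = i0 then 1 else 0) * (x i / ‖x‖) - t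
          - (g - 3) * t * (x i / ‖x‖) ^ 2)) =
      (g * (g - 2) * k t - g * t * k1 t + k2 t * t ^ 2 - (g - 3) * t * k1 t) * (x i / ‖x‖) ^ 2
      + (g * k1 t - 2 * t * k2 t + (g - 2) * k1 t) * ((if i = i0 then (1 : ℝ) else 0) * (x i / ‖x‖))
      + k2 t * (if i = i0 then (1 : ℝ) else 0) + (g * k t - t * k1 t) * 1 := by
    intro i
    split_ifs <;> ring
  rw [Finset.sum_congr rfl fun i _ => e i]
  simp only [Finset.sum_add_distrib, ← Finset.mul_sum]
  rw [S1, S2, S3, S4]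
  unfold Lam
  ring

/-- the profile -/
noncomputable def prof (α a b c t : ℝ) : ℝ := t ^ α * psum (hyp a b c) (1 - t ^ 2)

noncomputable def prof1 (α a b c t : ℝ) : ℝ :=
  α * t ^ (α - 1) * psum (hyp a b c) (1 - t ^ 2)
    - 2 * t ^ (α + 1) * psum (dcoef (hyp a b c)) (1 - t ^ 2)

noncomputable def prof2 (α a b c t : ℝ) : ℝ :=
  α * (α - 1) * t ^ (α - 2) * psum (hyp a b c) (1 - t ^ 2)
    - 2 * (2 * α + 1) * t ^ α * psum (dcoef (hyp a b c)) (1 - t ^ 2)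
    + 4 * t ^ (α + 2) * psum (dcoef (dcoef (hyp a b c))) (1 - t ^ 2)

theorem abs_arg {t : ℝ} (ht : t ∈ Ioo (0 : ℝ) (√ 2)) : |1 - t ^ 2| < 1 := by
  have h2 : t ^ 2 < 2 := (Real.lt_sqrt ht.1.le).1 ht.2
  have h3 : 0 < t ^ 2 := pow_pos ht.1 2
  rw [abs_lt]
  constructor <;> linarith

theorem psum_comp {u : ℕ → ℝ} (h : GoodCoef u) {t : ℝ} (ht : t ∈ Ioo (0 : ℝ) (√ 2)) :
    HasDerivAt (fun t => psum u (1 - t ^ 2)) (psum (dcoef u) (1 - t ^ 2) * (-(2 * t))) t := by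
  have h1 : HasDerivAt (fun t : ℝ => 1 - t ^ 2) (-(2 * t)) t := by
    simpa using (hasDerivAt_pow 2 t).const_sub 1
  exact HasDerivAt.comp t (h.hasDerivAt (abs_arg ht)) h1

theorem prof_deriv {α a b c : ℝ} (ha : 0 < a) (hb : 0 < b) (hc : 0 < c) {t : ℝ}
    (ht : t ∈ Ioo (0 : ℝ) (√ 2)) : HasDerivAt (prof α a b c) (prof1 α a b c t) t := by
  have g := hyp_good ha hb hc
  have h0 := ht.1.ne'
  refine ((Real.hasDerivAt_rpow_const (p := α) (Or.inl h0)).mul (psum_comp g ht)).congr_deriv ?_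
  unfold prof1
  rw [rpow_add_one h0]
  ring

theorem prof1_deriv {α a b c : ℝ} (ha : 0 < a) (hb : 0 < b) (hc : 0 < c) {t : ℝ}
    (ht : t ∈ Ioo (0 : ℝ) (√ 2)) : HasDerivAt (prof1 α a b c) (prof2 α a b c t) t := by
  have g := hyp_good ha hb hc
  have h0 := ht.1.ne'
  refine ((((Real.hasDerivAt_rpow_const (p := α - 1) (Or.inl h0)).const_mul α).mul
    (psum_comp g ht)).sub (((Real.hasDerivAt_rpow_const (p := α + 1) (Or.inl h0)).const_mul 2).mul
    (psum_comp g.dcoef ht))).congr_deriv ?_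
  unfold prof2
  have e1 : t ^ (α - 1) = t ^ α / t := rpow_sub_one h0 α
  have e2 : t ^ (α + 1 - 1) = t ^ α := by ring_nf
  have e3 : t ^ (α + 2) = t ^ (α + 1) * t := by
    rw [← rpow_add_one h0]
    ring_nf
  have e4 : t ^ (α - 1 - 1) = t ^ (α - 2) := by ring_nf
  rw [e2, e3, e4, e1, rpow_add_one h0]
  field_simp
  ring

theorem prof2_cont {α a b c : ℝ} (ha : 0 < a) (hb : 0 < b) (hc : 0 < c) :
    ContinuousOn (prof2 α a b c) (Ioo 0 (√ 2)) := by
  intro t ht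
  have g := hyp_good ha hb hc
  have h0 := ht.1.ne'
  have c0 := (psum_comp g ht).continuousAt
  have c1 := (psum_comp g.dcoef ht).continuousAt
  have c2 := (psum_comp g.dcoef.dcoef ht).continuousAt
  have r : ∀ p : ℝ, ContinuousAt (fun t : ℝ => t ^ p) t := fun p =>
    Real.continuousAt_rpow_const t p (Or.inl h0)
  exact ((((continuousAt_const.mul (r _)).mul c0).sub ((continuousAt_const.mul (r _)).mul c1)).add
    ((continuousAt_const.mul (r _)).mul c2)).continuousWithinAt

theorem prof_contDiff {α a b c : ℝ} (ha : 0 < a) (hb : 0 < b) (hc : 0 < c) :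
    ContDiffOn ℝ 2 (prof α a b c) (Ioo 0 (√ 2)) := by
  have d1 : ∀ t ∈ Ioo (0 : ℝ) (√ 2), deriv (prof α a b c) t = prof1 α a b c t :=
    fun t ht => (prof_deriv ha hb hc ht).deriv
  have d2 : ∀ t ∈ Ioo (0 : ℝ) (√ 2), deriv (prof1 α a b c) t = prof2 α a b c t :=
    fun t ht => (prof1_deriv ha hb hc ht).deriv
  have e2 : (2 : WithTop ℕ∞) = 1 + 1 := by norm_num
  have e1 : (1 : WithTop ℕ∞) = 0 + 1 := by norm_num
  rw [e2, contDiffOn_succ_iff_deriv_of_isOpen isOpen_Ioo]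
  refine ⟨fun t ht => (prof_deriv ha hb hc ht).differentiableAt.differentiableWithinAt,
    by simp, ?_⟩
  refine ContDiffOn.congr ?_ d1
  rw [e1, contDiffOn_succ_iff_deriv_of_isOpen isOpen_Ioo]
  refine ⟨fun t ht => (prof1_deriv ha hb hc ht).differentiableAt.differentiableWithinAt,
    by simp, ?_⟩
  refine ContDiffOn.congr ?_ d2
  exact contDiffOn_zero.2 (prof2_cont ha hb hc)

theorem prof_pos {α a b c : ℝ} (ha : 0 < a) (hb : 0 < b) (hc : 0 < c) {t : ℝ}
    (ht : t ∈ Ioc (0 : ℝ) 1) : 0 < prof α a b c t := by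
  have g := hyp_good ha hb hc
  have h2 : t ^ 2 ≤ 1 := pow_le_one₀ ht.1.le ht.2
  have h3 : 0 < t ^ 2 := pow_pos ht.1 2
  refine mul_pos (rpow_pos_of_pos ht.1 _) ?_
  refine (g.summable (z := 1 - t ^ 2) ?_).tsum_pos (fun m => ?_) 0 ?_
  · rw [abs_lt]
    constructor <;> linarith
  · exact mul_nonneg (g.1 m).le (pow_nonneg (by linarith) m)
  · simpa using g.1 0

theorem prof_ode {α a b c μ l N : ℝ} (ha : 0 < a) (hb : 0 < b) (hc : 0 < c) {t : ℝ}
    (ht : t ∈ Ioo (0 : ℝ) (√ 2)) (hα : α ^ 2 - α + μ = 0) (hcN : 2 * c = N - 1)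
    (hab : 2 * (a + b) = 2 * α + N - 2) (hprod : 4 * (a * b) = α * (α + N - 2) - l) :
    (1 - t ^ 2) * prof2 α a b c t - (N - 1) * t * prof1 α a b c t
      + (μ / t ^ 2) * prof α a b c t + l * prof α a b c t = 0 := by
  have h0 := ht.1.ne'
  have h := hyp_ode ha hb hc (abs_arg ht)
  unfold prof prof1 prof2
  have e1 : t ^ (α - 1) = t ^ α / t := rpow_sub_one h0 α
  have e2 : t ^ (α + 1) = t ^ α * t := rpow_add_one h0 α
  have e3 : t ^ (α + 2) = t ^ α * t ^ 2 := by
    rw [← rpow_add_natCast h0]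
    norm_num
  have e4 : t ^ (α - 2) = t ^ α / t ^ 2 := by
    rw [← rpow_sub_natCast h0]
    norm_num
  rw [e1, e2, e3, e4]
  clear e1 e2 e3 e4
  generalize psum (hyp a b c) (1 - t ^ 2) = F at *
  generalize psum (dcoef (hyp a b c)) (1 - t ^ 2) = F1 at *
  generalize psum (dcoef (dcoef (hyp a b c))) (1 - t ^ 2) = F2 at *
  generalize t ^ α = T at *
  have hμ : μ = α - α ^ 2 := by linarith
  have hc' : c = (N - 1) / 2 := by linarith
  have hb' : b = α + N / 2 - 1 - a := by linarith
  have hl : l = α * (α + N - 2) - 4 * (a * b) := by linarith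
  rw [hb', hc'] at h
  rw [hl, hμ, hb']
  refine Eq.trans (b := 4 * T * ((1 - t ^ 2) * (1 - (1 - t ^ 2)) * F2
    + ((N - 1) / 2 - (a + (α + N / 2 - 1 - a) + 1) * (1 - t ^ 2)) * F1
    - a * (α + N / 2 - 1 - a) * F)) ?_ (by rw [h, mul_zero])
  field_simp
  ring

theorem prof_limit {a b c ν αp αm : ℝ} (ha : 0 < a) (hb : 0 < b) (hc : 0 < c) (hν : 0 < ν)
    (hs : a + b = c + ν) (hα : αp - αm = 2 * ν) :
    Filter.Tendsto (fun t => prof αp a b c t / t ^ αm) (nhdsWithin 0 (Ioi 0))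
      (nhds (Gamma c * Gamma ν / (Gamma a * Gamma b))) := by
  have h1 : Filter.Tendsto (fun t : ℝ => 1 - t ^ 2) (nhdsWithin 0 (Ioi 0))
      (nhdsWithin 1 (Iio 1)) := by
    refine tendsto_nhdsWithin_iff.2 ⟨?_, ?_⟩
    · have : Filter.Tendsto (fun t : ℝ => 1 - t ^ 2) (nhds 0) (nhds (1 - 0 ^ 2)) :=
        (continuous_const.sub (continuous_pow 2)).tendsto 0
      norm_num at this
      exact this.mono_left nhdsWithin_le_nhds
    · filter_upwards [self_mem_nhdsWithin] with t ht
      have : 0 < t ^ 2 := pow_pos ht 2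
      simpa using this
  refine ((hyp_limit ha hb hc hν hs).comp h1).congr' ?_
  filter_upwards [self_mem_nhdsWithin] with t ht
  have ht : 0 < t := ht
  have e : αp = αm + 2 * ν := by linarith
  have e1 : (t ^ 2) ^ ν = t ^ (2 * ν) := by
    rw [rpow_mul ht.le]
    norm_num
  have e2 := (rpow_pos_of_pos ht αm).ne'
  simp only [Function.comp, prof, e, sub_sub_cancel, e1, rpow_add ht]
  field_simp

theorem lap_harm {n : ℕ} (hn : 2 ≤ n) {α a b c μ l g : ℝ} (ha : 0 < a) (hb : 0 < b) (hc : 0 < c)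
    (hα : α ^ 2 - α + μ = 0) (hcN : 2 * c = (n : ℝ) - 1)
    (hab : 2 * (a + b) = 2 * α + n - 2) (hprod : 4 * (a * b) = α * (α + n - 2) - l)
    (hg : Lam n g = l) {x : EuclideanSpace ℝ (Fin n)} (hx : x ∈ halfSpace n) :
    lap (fun x : EuclideanSpace ℝ (Fin n) => ‖x‖ ^ g * prof α a b c (x1 x / ‖x‖)) x
          + (μ / (x1 x) ^ 2) * (‖x‖ ^ g * prof α a b c (x1 x / ‖x‖)) = 0 := by
  have hB : 1 < √ 2 := by
    rw [Real.lt_sqrt zero_le_one]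
    norm_num
  have hr := halfSpace_norm_pos hx
  have hx1 : 0 < x1 x := hx
  have ht := halfSpace_ratio hx
  rw [lap_sep hn hB (prof_contDiff ha hb hc) (fun t ht => prof_deriv ha hb hc ht)
    (fun t ht => prof1_deriv ha hb hc ht) g hx rfl, hg]
  have h := prof_ode ha hb hc ⟨ht.1, ht.2.trans_lt hB⟩ hα hcN hab hprod
  have e0 : ‖x‖ ^ g = ‖x‖ ^ (g - 2) * ‖x‖ ^ 2 := by
    rw [← rpow_add_natCast hr.ne']
    norm_num
  have e1 : μ / (x1 x / ‖x‖) ^ 2 = μ / x1 x ^ 2 * ‖x‖ ^ 2 := by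
    field_simp
  rw [e1] at h
  rw [e0]
  linear_combination ‖x‖ ^ (g - 2) * h

/-- for `Λ(γ) < Λ(α₊)` there is a positive angular profile `k` on
`(0,1]`, `C²` on `(0,1)`, continuous at `1` with `k(1) > 0`, solving the angular
ODE and behaving like a positive multiple of `t^{α₋}` near `0`; the associated
functions `H₊ = |x|^γ k(x₁/|x|)` and `H₋ = |x|^{−(γ+n−2)} k(x₁/|x|)` are then
positive `L_μ`-harmonics on the half-space. -/
theorem stmt7 (n : ℕ) (hn : 2 ≤ n) (μ γ : ℝ) (hμ : μ < 1 / 4)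
    (hγ : Lam n γ < Lam n (aPlus μ)) :
    ∃ k : ℝ → ℝ,
      (∀ t ∈ Set.Ioc (0 : ℝ) 1, 0 < k t) ∧
      ContDiffOn ℝ 2 k (Set.Ioo 0 1) ∧
      ContinuousWithinAt k (Set.Ioc 0 1) 1 ∧ 0 < k 1 ∧
      (∀ t ∈ Set.Ioo (0 : ℝ) 1,
        (1 - t ^ 2) * deriv (deriv k) t - ((n : ℝ) - 1) * t * deriv k t
          + (μ / t ^ 2) * k t + Lam n γ * k t = 0) ∧
      (∃ l > (0 : ℝ),
        Filter.Tendsto (fun t => k t / t ^ aMinus μ) (nhdsWithin 0 (Set.Ioi 0)) (nhds l)) ∧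
      ContDiffOn ℝ 2
        (fun x : EuclideanSpace ℝ (Fin n) => ‖x‖ ^ γ * k (x1 x / ‖x‖)) (halfSpace n) ∧
      (∀ x ∈ halfSpace n, 0 < ‖x‖ ^ γ * k (x1 x / ‖x‖)) ∧
      (∀ x ∈ halfSpace n,
        lap (fun x : EuclideanSpace ℝ (Fin n) => ‖x‖ ^ γ * k (x1 x / ‖x‖)) x
          + (μ / (x1 x) ^ 2) * (‖x‖ ^ γ * k (x1 x / ‖x‖)) = 0) ∧
      ContDiffOn ℝ 2
        (fun x : EuclideanSpace ℝ (Fin n) => ‖x‖ ^ (-(γ + (n : ℝ) - 2)) * k (x1 x / ‖x‖))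
        (halfSpace n) ∧
      (∀ x ∈ halfSpace n, 0 < ‖x‖ ^ (-(γ + (n : ℝ) - 2)) * k (x1 x / ‖x‖)) ∧
      (∀ x ∈ halfSpace n,
        lap (fun x : EuclideanSpace ℝ (Fin n) => ‖x‖ ^ (-(γ + (n : ℝ) - 2)) * k (x1 x / ‖x‖)) x
          + (μ / (x1 x) ^ 2) * (‖x‖ ^ (-(γ + (n : ℝ) - 2)) * k (x1 x / ‖x‖)) = 0) := by
  have hB : 1 < √ 2 := by
    rw [Real.lt_sqrt zero_le_one]
    norm_num
  have hn' : (2 : ℝ) ≤ n := by exact_mod_cast hn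
  have hν : 0 < √ (1 / 4 - μ) := Real.sqrt_pos.2 (by linarith)
  have hν2 : √ (1 / 4 - μ) ^ 2 = 1 / 4 - μ := Real.sq_sqrt (by linarith)
  have hap : aPlus μ = 1 / 2 + √ (1 / 4 - μ) := rfl
  have ham : aMinus μ = 1 / 2 - √ (1 / 4 - μ) := rfl
  set ν := √ (1 / 4 - μ) with hνdef
  set α := aPlus μ with hαdef
  have hα : α ^ 2 - α + μ = 0 := by
    rw [hap]
    linarith
  obtain ⟨a, ha⟩ : ∃ a, a = (α - γ) / 2 := ⟨_, rfl⟩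
  obtain ⟨b, hb⟩ : ∃ b, b = (α + γ + n - 2) / 2 := ⟨_, rfl⟩
  obtain ⟨c, hc⟩ : ∃ c, c = ((n : ℝ) - 1) / 2 := ⟨_, rfl⟩
  have hprod : 4 * (a * b) = α * (α + n - 2) - Lam n γ := by
    rw [ha, hb, Lam]
    ring
  have hab : 2 * (a + b) = 2 * α + n - 2 := by
    rw [ha, hb]
    ring
  have hc0 : 0 < c := by linarith
  have hpos : 0 < a * b := by
    have : Lam n α = α * (α + n - 2) := rfl
    linarith
  have hsum : 0 < a + b := by linarith
  have ha0 : 0 < a := by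
    rcases pos_and_pos_or_neg_and_neg_of_mul_pos hpos with h | h
    · exact h.1
    · linarith [h.1, h.2]
  have hb0 : 0 < b := (pos_iff_pos_of_mul_pos hpos).1 ha0
  have hcN : 2 * c = (n : ℝ) - 1 := by linarith
  have hcd := prof_contDiff (α := α) ha0 hb0 hc0
  have hsub : Ioo (0 : ℝ) 1 ⊆ Ioo 0 (√ 2) := Ioo_subset_Ioo_right hB.le
  have hlam : Lam n (-(γ + (n : ℝ) - 2)) = Lam n γ := by
    unfold Lam
    ring
  have hpp : ∀ (g : ℝ), ∀ x ∈ halfSpace n, 0 < ‖x‖ ^ g * prof α a b c (x1 x / ‖x‖) :=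
    fun g x hx => mul_pos (rpow_pos_of_pos (halfSpace_norm_pos hx) _)
      (prof_pos ha0 hb0 hc0 (halfSpace_ratio hx))
  refine ⟨prof α a b c, fun t ht => prof_pos ha0 hb0 hc0 ht, hcd.mono hsub, ?_,
    prof_pos ha0 hb0 hc0 ⟨zero_lt_one, le_rfl⟩, ?_,
    ⟨Gamma c * Gamma ν / (Gamma a * Gamma b), ?_, ?_⟩,
    sep_contDiff hB hcd _, hpp _, fun x hx => lap_harm hn ha0 hb0 hc0 hα hcN hab hprod rfl hx,
    sep_contDiff hB hcd _, hpp _, fun x hx => lap_harm hn ha0 hb0 hc0 hα hcN hab hprod hlam hx⟩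
  · exact (prof_deriv ha0 hb0 hc0 ⟨zero_lt_one, hB⟩).continuousAt.continuousWithinAt
  · intro t ht
    have d1 : deriv (prof α a b c) =ᶠ[nhds t] prof1 α a b c := by
      filter_upwards [isOpen_Ioo.mem_nhds (hsub ht)] with s hs
      exact (prof_deriv ha0 hb0 hc0 hs).deriv
    rw [d1.deriv_eq, (prof1_deriv ha0 hb0 hc0 (hsub ht)).deriv,
      (prof_deriv ha0 hb0 hc0 (hsub ht)).deriv]
    exact prof_ode ha0 hb0 hc0 (hsub ht) hα hcN hab hprod
  · have := Gamma_pos_of_pos ha0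
    have := Gamma_pos_of_pos hb0
    have := Gamma_pos_of_pos hc0
    have := Gamma_pos_of_pos hν
    positivity
  · refine prof_limit ha0 hb0 hc0 hν ?_ ?_
    · linarith
    · rw [hap, ham]
      ring
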